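/- arXiv:2510.02912 — 3 statements merged into one kernel-verified Lean document; each statement's English description precedes it below -/
import Mathlib

section
/- Let α be a type with a nonempty finite ground set V (a finset), and let f : Finset α → ℝ be monotone (f(S) ≤ f(T) whenever S ⊆ T) and submodular (f(insert x S) − f(S) ≥ f(insert x T) − f(T) whenever S ⊆ T and x ∉ T). Let k ≥ 1 be a natural number. Then for every S ⊆ V and every T ⊆ V with |T| ≤ k: f(T) − f(S) ≤ k · max_{x ∈ V} (f(insert x S) − f(S)). -/
theorem submodular_gap_bound
    {α : Type*} [DecidableEq α] (V : Finset α) (hV : V.Nonempty)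
    (f : Finset α → ℝ)
    (hmono : ∀ S T : Finset α, S ⊆ T → f S ≤ f T)
    (hsub : ∀ S T : Finset α, S ⊆ T → ∀ x ∉ T,
      f (insert x T) - f T ≤ f (insert x S) - f S)
    (k : ℕ) (hk : 1 ≤ k)
    (S T : Finset α) (hS : S ⊆ V) (hT : T ⊆ V) (hTk : T.card ≤ k) :
    f T - f S ≤ (k : ℝ) * V.sup' hV (fun x => f (insert x S) - f S) := by
  set M := V.sup' hV (fun x => f (insert x S) - f S) with hM
  have hle : ∀ x ∈ V, f (insert x S) - f S ≤ M := fun x hx =>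
    Finset.le_sup' (fun x => f (insert x S) - f S) hx
  have hM0 : 0 ≤ M := by
    obtain ⟨x, hx⟩ := hV
    have h1 := hle x hx
    have h2 := hmono S (insert x S) (Finset.subset_insert x S)
    linarith
  have key : ∀ U : Finset α, U ⊆ V → f (U ∪ S) - f S ≤ (U.card : ℝ) * M := by
    intro U
    induction U using Finset.induction_on with
    | empty => intro _; simp
    | insert a U ha ih =>
      intro hU
      have h1 := ih ((Finset.subset_insert a U).trans hU)
      have h2 := hle a (hU (Finset.mem_insert_self a U))
      rw [Finset.card_insert_of_notMem ha, Finset.insert_union]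
      push_cast
      by_cases haS : a ∈ U ∪ S
      · rw [Finset.insert_eq_of_mem haS]
        linarith
      · have h3 := hsub S (U ∪ S) Finset.subset_union_right a haS
        linarith
  have h1 := key T hT
  have h2 := hmono T (T ∪ S) Finset.subset_union_left
  have h3 : (T.card : ℝ) * M ≤ (k : ℝ) * M :=
    mul_le_mul_of_nonneg_right (by exact_mod_cast hTk) hM0
  linarith
end

section
/- Let α be a type with a nonempty finite ground set V (a finset), and let f : Finset α → ℝ be monotone (f(S) ≤ f(T) whenever S ⊆ T) and submodular (f(insert x S) − f(S) ≥ f(insert x T) − f(T) whenever S ⊆ T and x ∉ T). Let k ≥ 1 be a natural number, let T ⊆ V with |T| ≤ k, let S ⊆ V, and let x* ∈ V be a maximizer of x ↦ f(insert x S) over V. Then f(T) − f(insert x* S) ≤ (1 − 1/k) · (f(T) − f(S)). -/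
theorem greedy_step_gap_shrink
    {α : Type*} [DecidableEq α] (V : Finset α) (hV : V.Nonempty)
    (f : Finset α → ℝ)
    (hmono : ∀ S T : Finset α, S ⊆ T → f S ≤ f T)
    (hsub : ∀ S T : Finset α, S ⊆ T → ∀ x ∉ T,
      f (insert x T) - f T ≤ f (insert x S) - f S)
    (k : ℕ) (hk : 1 ≤ k)
    (T : Finset α) (hT : T ⊆ V) (hTk : T.card ≤ k)
    (S : Finset α) (hS : S ⊆ V)
    (xstar : α) (hx : xstar ∈ V)
    (hmax : ∀ y ∈ V, f (insert y S) ≤ f (insert xstar S)) :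
    f T - f (insert xstar S) ≤ (1 - 1 / (k : ℝ)) * (f T - f S) := by
  have hd : 0 ≤ f (insert xstar S) - f S :=
    sub_nonneg.2 (hmono _ _ (Finset.subset_insert _ _))
  have key : ∀ U : Finset α, U ⊆ V →
      f (U ∪ S) - f S ≤ (U.card : ℝ) * (f (insert xstar S) - f S) := by
    intro U
    induction U using Finset.induction_on with
    | empty => intro _; simp
    | insert a U ha ih =>
      intro hU
      have h1 := ih ((Finset.subset_insert _ _).trans hU)
      have h2 := hmax a (hU (Finset.mem_insert_self _ _))
      rw [Finset.card_insert_of_notMem ha, Finset.insert_union]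
      push_cast
      by_cases hm : a ∈ U ∪ S
      · rw [Finset.insert_eq_of_mem hm]
        linarith
      · have h3 := hsub S (U ∪ S) Finset.subset_union_right a hm
        linarith
  have h1 := key T hT
  have h2 := hmono T (T ∪ S) Finset.subset_union_left
  have hc : (T.card : ℝ) ≤ k := by exact_mod_cast hTk
  have h3 := mul_le_mul_of_nonneg_right hc hd
  have hk0 : (0 : ℝ) < k := by exact_mod_cast hk
  have h4 : (f T - f S) / k ≤ f (insert xstar S) - f S := by
    rw [div_le_iff₀ hk0]
    linarith
  have h5 : (1 - 1 / (k : ℝ)) * (f T - f S) = (f T - f S) - (f T - f S) / k := by ring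
  rw [h5]
  linarith
end

section
/- Let α be a type with a nonempty finite ground set V (a finset), and let f : Finset α → ℝ be monotone (f(S) ≤ f(T) whenever S ⊆ T), submodular (f(insert x S) − f(S) ≥ f(insert x T) − f(T) whenever S ⊆ T and x ∉ T), and satisfy f(∅) = 0. Let k ≥ 1 and let S_0, S_1, …, S_k be a greedy chain: S_0 = ∅ and for each i, S_{i+1} = insert x_i S_i where x_i ∈ V maximizes x ↦ f(insert x S_i) over V. Then for every T ⊆ V with |T| ≤ k: f(S_k) ≥ (1 − (1 − 1/k)^k) · f(T), and in particular f(S_k) ≥ (1 − 1/e) · f(T). -/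
theorem greedy_submodular_approximation
    {α : Type*} [DecidableEq α] (V : Finset α) (hV : V.Nonempty)
    (f : Finset α → ℝ)
    (hmono : ∀ S T : Finset α, S ⊆ T → f S ≤ f T)
    (hsub : ∀ S T : Finset α, S ⊆ T → ∀ x ∉ T,
      f (insert x T) - f T ≤ f (insert x S) - f S)
    (hf0 : f ∅ = 0)
    (k : ℕ) (hk : 1 ≤ k)
    (S : ℕ → Finset α) (x : ℕ → α)
    (hS0 : S 0 = ∅)
    (hxV : ∀ i, x i ∈ V)
    (hmax : ∀ i, ∀ y ∈ V, f (insert y (S i)) ≤ f (insert (x i) (S i)))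
    (hstep : ∀ i, S (i + 1) = insert (x i) (S i)) :
    ∀ T ⊆ V, T.card ≤ k →
      (1 - (1 - 1 / (k : ℝ)) ^ k) * f T ≤ f (S k) ∧
      (1 - 1 / Real.exp 1) * f T ≤ f (S k) := by
  intro T hT hTk
  have hk0 : (0 : ℝ) < k := by exact_mod_cast hk
  have hfT : 0 ≤ f T := by
    rw [← hf0]; exact hmono _ _ (Finset.empty_subset _)
  have key : ∀ i, ∀ U : Finset α, U ⊆ V →
      f (U ∪ S i) - f (S i) ≤ (U.card : ℝ) * (f (S (i + 1)) - f (S i)) := by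
    intro i U
    induction U using Finset.induction_on with
    | empty => intro _; simp
    | insert a U ha ih =>
      intro hU
      have h1 := ih (fun y hy => hU (Finset.mem_insert_of_mem hy))
      have h2 := hmax i a (hU (Finset.mem_insert_self a U))
      have h4 : f (S i) ≤ f (S (i + 1)) := by
        rw [hstep]; exact hmono _ _ (Finset.subset_insert _ _)
      rw [← hstep] at h2
      rw [Finset.card_insert_of_notMem ha, Finset.insert_union]
      push_cast
      by_cases h : a ∈ U ∪ S i
      · rw [Finset.insert_eq_of_mem h]
        linarith
      · have h3 := hsub (S i) (U ∪ S i) Finset.subset_union_right a h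
        linarith
  have rate : ∀ i, f T - f (S i) ≤ (1 - 1 / (k : ℝ)) ^ i * f T := by
    intro i
    induction i with
    | zero => simp [hS0, hf0]
    | succ i ih =>
      have h1 := key i T hT
      have h2 := hmono T (T ∪ S i) Finset.subset_union_left
      have h4 : f (S i) ≤ f (S (i + 1)) := by
        rw [hstep]; exact hmono _ _ (Finset.subset_insert _ _)
      have h5 : (T.card : ℝ) * (f (S (i + 1)) - f (S i)) ≤ k * (f (S (i + 1)) - f (S i)) :=
        mul_le_mul_of_nonneg_right (by exact_mod_cast hTk) (by linarith)
      have h6 : (f T - f (S i)) / k ≤ f (S (i + 1)) - f (S i) := by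
        rw [div_le_iff₀ hk0]; linarith
      have h7 : (0 : ℝ) ≤ 1 - 1 / (k : ℝ) := by
        rw [sub_nonneg, div_le_one hk0]; exact_mod_cast hk
      calc f T - f (S (i + 1)) ≤ (f T - f (S i)) - (f T - f (S i)) / k := by linarith
        _ = (1 - 1 / (k : ℝ)) * (f T - f (S i)) := by ring
        _ ≤ (1 - 1 / (k : ℝ)) * ((1 - 1 / (k : ℝ)) ^ i * f T) :=
          mul_le_mul_of_nonneg_left ih h7
        _ = _ := by ring
  have hr := rate k
  have he : (1 - 1 / (k : ℝ)) ^ k ≤ 1 / Real.exp 1 := by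
    have := Real.one_sub_div_pow_le_exp_neg (n := k) (t := 1) (by exact_mod_cast hk)
    rwa [Real.exp_neg, ← one_div] at this
  have h8 := mul_le_mul_of_nonneg_right he hfT
  constructor <;> linarith
end
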